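/- Let f : ℕ → ℚ be strictly increasing with f(0) = 0 and f(1) = 1, and suppose there exist rationals p, q with q ≠ 0 such that f(n+2) = p·f(n+1) + q·f(n) for all n, where the polynomial X² − pX − q has two distinct complex roots and the ratio of these two roots is not a root of unity. If the set of triples (m,n,k) of pairwise distinct natural numbers with f(n) ≠ 0 and f(m) + f(k) = 2·f(n) is infinite, then either f(n) = F_n for all n (f is the Fibonacci sequence), or f(n) = (2^n − (−1)^n)/3 for all n. -/

import Mathlib

/-!
Strict monotonicity forces `p = f 2 > f 1 = 1`, which already excludes both sequences of the
conclusion (each takes the value `1` at `1` and at `2`). The theorem is therefore proved by showing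
that a strictly increasing `f` has only finitely many three-term progressions.

* The discriminant `p ^ 2 + 4 * q` is positive: otherwise the quotients `f (n + 1) / f n` would
  decrease by at least a fixed amount at every step (`disc_nonneg`). So there are real roots
  `α > |β|`, with `(α - β) f n = α ^ n - β ^ n`, and monotonicity gives `1 ≤ α`.
* A progression has the form `f m + f (n + a) = 2 f n` with `m < n` and `0 < a`. If `1 < α`, then
  `a` is bounded, so some `a` occurs for arbitrarily large `n`.
* If `α ^ a ≠ 2`, the difference `b = n - m` is bounded as well, so some pair `(a, b)` occurs for
  arbitrarily large `m`, and dominance of `α` makes both roots zeros of `X ^ (b + a) - 2 X ^ b + 1`.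
  For `α = 1` a single progression already gives this. Then `α`, `β` and their inverses are
  algebraic integers, so `p` is an integer and `q = ±1`; with `p ≥ 2` this yields `α > 2`,
  contradicting `α ^ a < 2` (`no_common_trinomial`).
* If `α ^ a = 2`, then `β ^ n (β ^ a - 2) = (α - β) f m ≥ 0` forces `β < 0`, while `α ≤ 2` and
  `p > 1` give `β > -1`; for large `n` the left side is too small unless `m = 0`, which is
  impossible too (`no_power_two`).
-/

/-- A zero of the trinomial `X ^ (b + a) - 2 X ^ b + 1` is a unit among the algebraic integers. -/
lemma trinomial_integral {x : ℝ} {a b : ℕ} (ha : 0 < a) (hb : 0 < b)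
    (h : x ^ (b + a) + 1 = 2 * x ^ b) : IsIntegral ℤ x ∧ IsIntegral ℤ x⁻¹ := by
  have hx : IsIntegral ℤ x := by
    refine ⟨Polynomial.X ^ (b + a) + (1 - 2 * Polynomial.X ^ b), ?_, ?_⟩
    · apply Polynomial.monic_X_pow_add
      have h2 : (1 - 2 * Polynomial.X ^ b : Polynomial ℤ).degree ≤ (b : ℕ) := by
        compute_degree
        exact le_rfl
      exact lt_of_le_of_lt h2 (by exact_mod_cast (by omega : b < b + a))
    · simp only [Polynomial.eval₂_add, Polynomial.eval₂_sub, Polynomial.eval₂_mul,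
        Polynomial.eval₂_pow, Polynomial.eval₂_X, Polynomial.eval₂_one, Polynomial.eval₂_ofNat]
      linarith
  refine ⟨hx, ?_⟩
  obtain ⟨c, rfl⟩ : ∃ c, b = c + 1 := ⟨b - 1, by omega⟩
  have hinv : x * (2 * x ^ c - x ^ (c + a)) = 1 := by
    have h3 : x ^ (c + 1 + a) = x * x ^ (c + a) := by ring
    have h4 : x ^ (c + 1) = x * x ^ c := by ring
    rw [h3, h4] at h
    linarith
  rw [inv_eq_of_mul_eq_one_right hinv]
  have h2 : IsIntegral ℤ (2 : ℝ) := by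
    simpa using (isIntegral_algebraMap (R := ℤ) (A := ℝ) (x := 2))
  exact (h2.mul (hx.pow c)).sub (hx.pow _)

lemma rat_integral {r : ℚ} (h : IsIntegral ℤ (r : ℝ)) : ∃ z : ℤ, r = z := by
  have h2 : IsIntegral ℤ (algebraMap ℚ ℝ r) := by simpa using h
  rw [isIntegral_algebraMap_iff (algebraMap ℚ ℝ).injective] at h2
  obtain ⟨z, hz⟩ := IsIntegrallyClosed.isIntegral_iff.mp h2
  exact ⟨z, by simpa using hz.symm⟩

/-- If both roots are zeros of `X ^ (b + a) - 2 X ^ b + 1`, they are units, so `p` is an integer,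
`q = ±1`, and the larger root exceeds `2`, which is too large for such a trinomial. -/
lemma no_common_trinomial {p q : ℚ} {α β : ℝ} (hs : α + β = p) (hm : α * β = -q) (hlt : β < α)
    (hp : 1 < p) {a b : ℕ} (ha : 0 < a) (hb : 0 < b)
    (h₁ : α ^ (b + a) + 1 = 2 * α ^ b) (h₂ : β ^ (b + a) + 1 = 2 * β ^ b) : False := by
  obtain ⟨iα, iα'⟩ := trinomial_integral ha hb h₁
  obtain ⟨iβ, iβ'⟩ := trinomial_integral ha hb h₂
  obtain ⟨P, hP⟩ := rat_integral (r := p) (by rw [← hs]; exact iα.add iβ)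
  obtain ⟨Q, hQ⟩ := rat_integral (r := -q) (by push_cast; rw [← hm]; exact iα.mul iβ)
  obtain ⟨R, hR⟩ := rat_integral (r := (-q)⁻¹)
    (by push_cast; rw [← hm, mul_inv]; exact iα'.mul iβ')
  have hα0 : α ≠ 0 := by
    rintro rfl
    rw [zero_pow (by omega), zero_pow (by omega)] at h₁
    norm_num at h₁
  have hβ0 : β ≠ 0 := by
    rintro rfl
    rw [zero_pow (by omega), zero_pow (by omega)] at h₂
    norm_num at h₂
  have hq0 : (-q) ≠ 0 := by
    intro h
    have : α * β = 0 := by rw [hm]; exact_mod_cast h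
    exact (mul_ne_zero hα0 hβ0) this
  have hQR : Q * R = 1 := by
    have : (-q) * (-q)⁻¹ = 1 := mul_inv_cancel₀ hq0
    rw [hQ] at this hR
    rw [hR] at this
    exact_mod_cast this
  have hP2 : 2 ≤ P := by
    rw [hP] at hp
    have : 1 < P := by exact_mod_cast hp
    omega
  have hsP : α + β = P := by rw [hs, hP]; simp
  have hmQ : α * β = Q := by
    rw [hm]
    have : ((-q : ℚ) : ℝ) = ((Q : ℚ) : ℝ) := by rw [hQ]
    simpa using this
  have hP2' : (2 : ℝ) ≤ P := by exact_mod_cast hP2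
  have hα2 : 2 < α := by
    rcases Int.eq_one_or_neg_one_of_mul_eq_one hQR with h | h
    · rw [h] at hmQ
      push_cast at hmQ
      -- with `α * β = 1` the value `p = 2` would give a double root
      have hP3 : 3 ≤ P := by
        by_contra hcon
        have : P = 2 := by omega
        rw [this] at hsP
        push_cast at hsP
        nlinarith [mul_pos (sub_pos.2 hlt) (sub_pos.2 hlt)]
      have hP3' : (3 : ℝ) ≤ P := by exact_mod_cast hP3
      by_contra hcon
      push Not at hcon
      nlinarith
    · rw [h] at hmQ
      push_cast at hmQ
      by_contra hcon
      push Not at hcon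
      nlinarith
  have hb0 : 0 < α ^ b := by positivity
  have ha2 : α ≤ α ^ a := le_self_pow₀ (by linarith) (by omega)
  rw [pow_add] at h₁
  nlinarith

/-- A pigeonhole principle: if boundedly many values of `a` suffice for arbitrarily large `n`, then
one value does. -/
lemma pigeonhole_unbounded {P : ℕ → ℕ → Prop} (A : ℕ)
    (h : ∀ N, ∃ n, N ≤ n ∧ ∃ a ≤ A, P n a) : ∃ a, ∀ N, ∃ n, N ≤ n ∧ P n a := by
  by_contra! hcon
  choose M hM using hcon
  obtain ⟨n, hn, a, ha, hP⟩ := h ((Finset.range (A + 1)).sup M)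
  exact hM a n ((Finset.le_sup (Finset.mem_range.2 (by omega))).trans hn) hP

lemma exists_small_pow {r : ℝ} (h0 : 0 ≤ r) (h1 : r < 1) (C : ℝ) {ε : ℝ} (hε : 0 < ε) :
    ∃ N : ℕ, ∀ n, N ≤ n → r ^ n * C < ε := by
  have ht := (tendsto_pow_atTop_nhds_zero_of_lt_one h0 h1).mul_const C
  rw [zero_mul] at ht
  exact Filter.eventually_atTop.1 (ht.eventually_lt_const hε)

/-- If the discriminant is negative, the quotients `f (n + 1) / f n`, which start at `p`, decrease
by at least `c = -(p ^ 2 + 4 q) / (4 p)` at every step. This contradicts `f n < f (n + 1)`. -/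
lemma disc_nonneg {f : ℕ → ℚ} (hmono : StrictMono f) (h0 : f 0 = 0) {p q : ℚ}
    (hp : 1 < p) (hrec : ∀ n : ℕ, f (n + 2) = p * f (n + 1) + q * f n) :
    0 ≤ p ^ 2 + 4 * q := by
  by_contra! hD
  have hpos : ∀ n, 0 < f (n + 1) := fun n => by
    rw [← h0]; exact hmono (Nat.succ_pos n)
  obtain ⟨c, hc⟩ : ∃ c, c = -(p ^ 2 + 4 * q) / (4 * p) := ⟨_, rfl⟩
  have hcp : c * p = -(p ^ 2 + 4 * q) / 4 := by rw [hc]; field_simp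
  have hc0 : 0 < c := by rw [hc]; apply div_pos <;> linarith
  have key : ∀ n : ℕ, f (n + 2) ≤ (p - n * c) * f (n + 1) := by
    intro n
    induction n with
    | zero => rw [hrec 0, h0]; simp
    | succ n ih =>
      have hx := hpos (n + 1)
      have hy := hpos n
      rw [hrec (n + 1)]
      rw [show n + 1 + 1 = n + 2 from rfl] at *
      generalize f (n + 2) = x at *
      generalize f (n + 1) = y at *
      push_cast
      have hn : (0 : ℚ) ≤ n * c := by positivity
      have hxy : x ≤ p * y := by nlinarith
      have e1 : c * x * y ≤ c * p * y ^ 2 := by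
        have : c * y * x ≤ c * y * (p * y) := mul_le_mul_of_nonneg_left hxy (by positivity)
        nlinarith
      rw [hcp] at e1
      have e2 : (p * x + q * y) * y ≤ x ^ 2 - c * x * y := by
        nlinarith [sq_nonneg (x - p * y / 2)]
      have e3 : x * x ≤ x * ((p - n * c) * y) := mul_le_mul_of_nonneg_left ih hx.le
      refine le_of_mul_le_mul_right ?_ hy
      nlinarith
  obtain ⟨n, hn⟩ := exists_nat_gt (p / c)
  rw [div_lt_iff₀ hc0] at hn
  have h2 := key n
  have h3 := hpos n
  have h4 := hpos (n + 1)
  rw [show n + 1 + 1 = n + 2 from rfl] at h4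
  nlinarith

/-- The exceptional case `α ^ a = 2`, where the difference `n - m` need not be bounded. -/
lemma no_power_two {f : ℕ → ℝ} {α β : ℝ} (hf1 : ∀ n, 0 < n → 1 ≤ f n) (h0 : f 0 = 0)
    (hb : ∀ n, (α - β) * f n = α ^ n - β ^ n) (hβ0 : β ≠ 0) (hdom : |β| < α) (hα : 1 < α)
    (hp : 1 < α + β) {a : ℕ} (ha : 0 < a) (h2 : α ^ a = 2)
    (h : ∀ N, ∃ n, N ≤ n ∧ ∃ m < n, f m + f (n + a) = 2 * f n) : False := by
  have hlt : β < α := (le_abs_self β).trans_lt hdom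
  have hβa : β ^ a < 2 := by
    rw [← h2]
    calc β ^ a ≤ |β| ^ a := by rw [← abs_pow]; exact le_abs_self _
      _ < α ^ a := pow_lt_pow_left₀ hdom (abs_nonneg _) (by omega)
  have hα2 : α ≤ 2 := by rw [← h2]; exact le_self_pow₀ hα.le (by omega)
  have heq : ∀ m n, f m + f (n + a) = 2 * f n → β ^ n * (β ^ a - 2) = (α - β) * f m := by
    intro m n e
    have e2 : (α - β) * f m + (α - β) * f (n + a) = 2 * ((α - β) * f n) := by
      rw [← mul_add, e]; ring
    rw [hb (n + a), hb n, pow_add, pow_add, h2] at e2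
    linarith
  have hfm : ∀ m n, f m + f (n + a) = 2 * f n → 1 ≤ f m := by
    intro m n e
    rcases Nat.eq_zero_or_pos m with rfl | hm
    · have := heq 0 n e
      rw [h0, mul_zero] at this
      rcases mul_eq_zero.1 this with h' | h'
      · exact absurd h' (pow_ne_zero _ hβ0)
      · linarith
    · exact hf1 m hm
  have hβneg : β < 0 := by
    by_contra! hcon
    obtain ⟨n, -, m, -, e⟩ := h 0
    have e1 := heq m n e
    have e2 := hfm m n e
    have e3 : 0 ≤ β ^ n := by positivity
    nlinarith
  have hβ1 : |β| < 1 := by rw [abs_of_neg hβneg]; linarith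
  obtain ⟨N, hN⟩ := exists_small_pow (abs_nonneg β) hβ1 (|β ^ a - 2|) (sub_pos.2 hlt)
  obtain ⟨n, hn, m, -, e⟩ := h N
  have e1 := heq m n e
  have e2 := hfm m n e
  have e3 := hN n hn
  rw [← abs_pow, ← abs_mul, e1] at e3
  have e4 := le_abs_self ((α - β) * f m)
  nlinarith [sub_pos.2 hlt]

/-- Omitting the non-unitary condition, an increasing, simple, non-degenerate binary
recurrence over `ℚ` with `f 0 = 0` and `f 1 = 1` containing infinitely many three-term
arithmetic progressions is the Fibonacci sequence or `f n = (2^n - (-1)^n)/3`. -/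
theorem fibonacci_characterization_unitary (f : ℕ → ℚ) (hmono : StrictMono f)
    (h0 : f 0 = 0) (h1 : f 1 = 1) (p q : ℚ) (hq : q ≠ 0)
    (hrec : ∀ n : ℕ, f (n + 2) = p * f (n + 1) + q * f n)
    (hroots : ∃ α β : ℂ, α ≠ β ∧
      α ^ 2 - (p : ℂ) * α - (q : ℂ) = 0 ∧ β ^ 2 - (p : ℂ) * β - (q : ℂ) = 0 ∧
      (∀ l : ℕ, 0 < l → (α / β) ^ l ≠ 1))
    (hinf : {x : ℕ × ℕ × ℕ | x.1 ≠ x.2.1 ∧ x.1 ≠ x.2.2 ∧ x.2.1 ≠ x.2.2 ∧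
      f x.2.1 ≠ 0 ∧ f x.1 + f x.2.2 = 2 * f x.2.1}.Infinite) :
    (∀ n : ℕ, f n = Nat.fib n) ∨ (∀ n : ℕ, f n = ((2 : ℚ) ^ n - (-1) ^ n) / 3) := by
  exfalso
  have hp : 1 < p := by
    have h2 := hmono (show 1 < 2 by norm_num)
    rw [hrec 0, h0, zero_add, h1] at h2
    linarith
  have hD : 0 < p ^ 2 + 4 * q := by
    refine lt_of_le_of_ne (disc_nonneg hmono h0 hp hrec) fun hD => ?_
    obtain ⟨x, y, hxy, hx, hy, -⟩ := hroots
    have hDC : (p : ℂ) ^ 2 + 4 * q = 0 := by exact_mod_cast hD.symm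
    have hx2 : (2 * x - p) ^ 2 = 0 := by linear_combination 4 * hx + hDC
    have hy2 : (2 * y - p) ^ 2 = 0 := by linear_combination 4 * hy + hDC
    have hx3 := pow_eq_zero_iff (two_ne_zero) |>.1 hx2
    have hy3 := pow_eq_zero_iff (two_ne_zero) |>.1 hy2
    exact hxy (by linear_combination (hx3 - hy3) / 2)
  obtain ⟨α, β, hs, hm, hlt⟩ : ∃ α β : ℝ, α + β = p ∧ α * β = -q ∧ β < α := by
    have hD' : (0 : ℝ) < (p : ℝ) ^ 2 + 4 * q := by exact_mod_cast hD
    have hsq := Real.sq_sqrt hD'.le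
    have hsp := Real.sqrt_pos.2 hD'
    refine ⟨(p + √((p : ℝ) ^ 2 + 4 * q)) / 2, (p - √((p : ℝ) ^ 2 + 4 * q)) / 2, by ring, ?_, ?_⟩
    · linear_combination (-1 / 4) * hsq
    · linarith
  have hpR : 1 < α + β := by rw [hs]; exact_mod_cast hp
  have hqR : (q : ℝ) ≠ 0 := by exact_mod_cast hq
  have hβ0 : β ≠ 0 := by rintro rfl; apply hqR; linarith
  have hdom : |β| < α := abs_lt.2 ⟨by linarith, hlt⟩
  have hα0 : 0 < α := (abs_nonneg β).trans_lt hdom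
  obtain ⟨F, hF⟩ : ∃ F : ℕ → ℝ, ∀ n, F n = f n := ⟨_, fun _ => rfl⟩
  have hF0 : F 0 = 0 := by rw [hF, h0]; simp
  have hF1 : F 1 = 1 := by rw [hF, h1]; simp
  have hFmono : StrictMono F := fun i j hij => by
    rw [hF, hF]; exact_mod_cast hmono hij
  have hFrec : ∀ n, F (n + 2) = (α + β) * F (n + 1) - α * β * F n := fun n => by
    rw [hs, hm, hF, hF, hF, hrec n]; push_cast; ring
  have hFge : ∀ n, 0 < n → 1 ≤ F n := fun n hn => by
    rw [← hF1]; exact hFmono.monotone hn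
  have hstep : ∀ n, F (n + 1) = α * F n + β ^ n := by
    intro n
    induction n with
    | zero => rw [hF0, zero_add, hF1]; simp
    | succ n ih => rw [hFrec n, pow_succ]; linear_combination β * ih
  have hbinet : ∀ n, (α - β) * F n = α ^ n - β ^ n := by
    intro n
    induction n with
    | zero => rw [hF0]; simp
    | succ n ih => rw [hstep n, pow_succ, pow_succ]; linear_combination α * ih
  have hα1 : 1 ≤ α := by
    by_contra! hcon
    obtain ⟨N, hN⟩ := exists_small_pow (abs_nonneg β) (hdom.trans hcon) 1 (sub_pos.2 hcon)
    have e1 := hN (N + 1) (by omega)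
    rw [mul_one, ← abs_pow] at e1
    have e2 := le_abs_self (β ^ (N + 1))
    have e3 := hstep (N + 1)
    have e4 := hFge (N + 1) (by omega)
    have e5 := hFmono (Nat.lt_succ_self (N + 1))
    rw [Nat.succ_eq_add_one] at e5
    nlinarith
  -- arbitrarily late progressions, written with `m < n < n + a`
  have hsol : ∀ N, ∃ n, N ≤ n ∧ ∃ a, 0 < a ∧ ∃ m < n, F m + F (n + a) = 2 * F n := by
    by_contra! hcon
    obtain ⟨N, hN⟩ := hcon
    have hmid : ∀ m n k : ℕ, m ≠ n → f m + f k = 2 * f n → m < k → n < N ∧ m < n ∧ n < k := by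
      intro m n k hmn e hmk
      have e1 := hmono hmk
      have m1 : m < n := hmono.lt_iff_lt.1 (by linarith)
      have m2 : n < k := hmono.lt_iff_lt.1 (by linarith)
      refine ⟨?_, m1, m2⟩
      by_contra! hNn
      apply hN n hNn (k - n) (by omega) m m1
      rw [show n + (k - n) = k by omega, hF, hF, hF]
      exact_mod_cast e
    -- each outer term of a progression is determined by the other two terms
    have hinj : ∀ m n k k' : ℕ, f m + f k = 2 * f n → f m + f k' = 2 * f n → k = k' :=
      fun m n k k' e e' => hmono.injective (by linarith)
    have hinj' : ∀ m n k k' : ℕ, f k + f m = 2 * f n → f k' + f m = 2 * f n → k = k' :=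
      fun m n k k' e e' => hmono.injective (by linarith)
    apply hinf
    have hfin : (((Finset.range N ×ˢ Finset.range N : Finset (ℕ × ℕ)) : Set (ℕ × ℕ))).Finite :=
      Finset.finite_toSet _
    have A : {x : ℕ × ℕ × ℕ | (x.1 < N ∧ x.2.1 < N) ∧ f x.1 + f x.2.2 = 2 * f x.2.1}.Finite := by
      refine Set.Finite.of_finite_image
        (f := fun x : ℕ × ℕ × ℕ => (x.1, x.2.1)) (hfin.subset ?_) ?_
      · rintro _ ⟨x, ⟨hx, -⟩, rfl⟩
        simpa using hx
      · rintro ⟨m, n, k⟩ ⟨-, h⟩ ⟨m', n', k'⟩ ⟨-, h'⟩ e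
        simp only [Prod.mk.injEq] at e h h' ⊢
        obtain ⟨rfl, rfl⟩ := e
        exact ⟨rfl, rfl, hinj _ _ _ _ h h'⟩
    have B : {x : ℕ × ℕ × ℕ | (x.2.2 < N ∧ x.2.1 < N) ∧ f x.1 + f x.2.2 = 2 * f x.2.1}.Finite := by
      refine Set.Finite.of_finite_image
        (f := fun x : ℕ × ℕ × ℕ => (x.2.2, x.2.1)) (hfin.subset ?_) ?_
      · rintro _ ⟨x, ⟨hx, -⟩, rfl⟩
        simpa using hx
      · rintro ⟨m, n, k⟩ ⟨-, h⟩ ⟨m', n', k'⟩ ⟨-, h'⟩ e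
        simp only [Prod.mk.injEq] at e h h' ⊢
        obtain ⟨rfl, rfl⟩ := e
        exact ⟨hinj' _ _ _ _ h h', rfl, rfl⟩
    refine (A.union B).subset ?_
    rintro ⟨m, n, k⟩ ⟨hmn, hmk, hnk, -, e⟩
    dsimp only at hmn hmk hnk e
    rcases lt_or_gt_of_ne hmk with hlt' | hlt'
    · have := hmid m n k hmn e hlt'
      exact Or.inl ⟨⟨by dsimp only; omega, this.1⟩, e⟩
    · have := hmid k n m hnk.symm (by linarith) hlt'
      exact Or.inr ⟨⟨by dsimp only; omega, this.1⟩, e⟩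
  have hsol' : ∀ m n a, F m + F (n + a) = 2 * F n →
      α ^ m + α ^ (n + a) - 2 * α ^ n = β ^ m + β ^ (n + a) - 2 * β ^ n := by
    intro m n a e
    linear_combination (α - β) * e - hbinet m - hbinet (n + a) + 2 * hbinet n
  rcases hα1.eq_or_lt with hα1 | hα1
  · obtain ⟨n, -, a, ha, m, hmn, e⟩ := hsol 0
    obtain ⟨b, rfl⟩ : ∃ b, n = m + b := ⟨n - m, by omega⟩
    have e1 := hsol' _ _ _ e
    rw [← hα1] at e1
    refine no_common_trinomial hs hm hlt hp ha (show 0 < b by omega) (by rw [← hα1]; norm_num) ?_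
    apply mul_left_cancel₀ (pow_ne_zero m hβ0)
    rw [add_assoc, pow_add β m, pow_add β m] at e1
    norm_num at e1
    linarith
  obtain ⟨ρ, hρ⟩ : ∃ ρ, ρ = |β| / α := ⟨_, rfl⟩
  have hρ0 : 0 ≤ ρ := by rw [hρ]; positivity
  have hρ1 : ρ < 1 := by rw [hρ, div_lt_one hα0]; exact hdom
  have hβρ : ∀ n, |β ^ n| = ρ ^ n * α ^ n := fun n => by
    rw [abs_pow, ← mul_pow, hρ, div_mul_cancel₀ _ hα0.ne']
  have hup : ∀ n, (α - β) * F n ≤ 2 * α ^ n := fun n => by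
    have e1 := neg_abs_le (β ^ n)
    have e2 := pow_le_one₀ (n := n) hρ0 hρ1.le
    have e3 : 0 < α ^ n := by positivity
    rw [hβρ] at e1
    rw [hbinet]
    nlinarith
  have hpowbound : ∀ C : ℝ, ∃ A : ℕ, ∀ a, α ^ a ≤ C → a ≤ A := by
    intro C
    obtain ⟨A, hA⟩ := pow_unbounded_of_one_lt C hα1
    refine ⟨A, fun a h => ?_⟩
    exact ((pow_lt_pow_iff_right₀ hα1).1 (h.trans_lt hA)).le
  obtain ⟨A, hA⟩ := hpowbound (4 / (1 - ρ))
  obtain ⟨a, hPa⟩ := pigeonhole_unbounded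
      (P := fun n a => 0 < a ∧ ∃ m < n, F m + F (n + a) = 2 * F n) A (by
    intro N
    obtain ⟨n, hn, a, ha, m, hmn, e⟩ := hsol N
    refine ⟨n, hn, a, hA a ?_, ha, m, hmn, e⟩
    rw [le_div_iff₀ (by linarith)]
    have e1 := le_abs_self (β ^ (n + a))
    have e2 : ρ ^ (n + a) ≤ ρ := pow_le_of_le_one hρ0 hρ1.le (by omega)
    have e3 : 0 < α ^ (n + a) := by positivity
    have e4 : 0 < α ^ n := by positivity
    have e5 : 0 ≤ F m := by rw [← hF0]; exact hFmono.monotone (Nat.zero_le m)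
    have e6 := hup n
    have e7 := hbinet (n + a)
    rw [hβρ] at e1
    have e8 : (1 - ρ) * α ^ (n + a) ≤ 4 * α ^ n := by
      have e9 : (α - β) * F (n + a) ≤ 2 * ((α - β) * F n) := by
        nlinarith [sub_pos.2 hlt]
      nlinarith
    rw [pow_add] at e8
    refine le_of_mul_le_mul_right ?_ e4
    linarith)
  have ha : 0 < a := by obtain ⟨n, -, h, -⟩ := hPa 0; exact h
  replace hPa : ∀ N, ∃ n, N ≤ n ∧ ∃ m < n, F m + F (n + a) = 2 * F n := fun N => by
    obtain ⟨n, hn, -, h⟩ := hPa N; exact ⟨n, hn, h⟩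
  by_cases h2 : α ^ a = 2
  · exact no_power_two hFge hF0 hbinet hβ0 hdom hα1 hpR ha h2 hPa
  have hc : 0 < |α ^ a - 2| := abs_pos.2 (sub_ne_zero.2 h2)
  obtain ⟨c, hcdef⟩ : ∃ c, c = |α ^ a - 2| := ⟨_, rfl⟩
  rw [← hcdef] at hc
  obtain ⟨N₀, hN₀⟩ := exists_small_pow hρ0 hρ1 (|β ^ a - 2|) (half_pos hc)
  obtain ⟨B, hB⟩ := hpowbound (4 / c)
  have hPb : ∀ N, ∃ m, N ≤ m ∧ ∃ b ≤ B, 0 < b ∧ F m + F (m + b + a) = 2 * F (m + b) := by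
    intro N
    obtain ⟨n, hn, m, hmn, e⟩ := hPa (N₀ + N + B)
    obtain ⟨b, rfl⟩ : ∃ b, n = m + b := ⟨n - m, by omega⟩
    have hbB : b ≤ B := by
      apply hB
      rw [le_div_iff₀ hc]
      have e1 := hsol' _ _ _ e
      have e2 : α ^ (m + b) * (α ^ a - 2) =
          β ^ (m + b) * (β ^ a - 2) - (α - β) * F m := by
        rw [hbinet, mul_sub, mul_sub, ← pow_add, ← pow_add]; linarith
      have e3 : α ^ (m + b) * c ≤ ρ ^ (m + b) * α ^ (m + b) * |β ^ a - 2| + 2 * α ^ m := by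
        have e4 : α ^ (m + b) * c = |α ^ (m + b) * (α ^ a - 2)| := by
          rw [abs_mul, hcdef, abs_of_pos (pow_pos hα0 _)]
        rw [e4, e2]
        refine (abs_sub _ _).trans ?_
        rw [abs_mul, hβρ]
        have e5 : 0 ≤ F m := by rw [← hF0]; exact hFmono.monotone (Nat.zero_le m)
        rw [abs_of_nonneg (mul_nonneg (sub_pos.2 hlt).le e5)]
        linarith [hup m]
      have e6 := hN₀ (m + b) (by omega)
      have e7 : 0 < α ^ (m + b) := by positivity
      have e8 : 0 < α ^ m := by positivity
      have e9 : α ^ (m + b) * c ≤ 4 * α ^ m := by nlinarith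
      rw [pow_add] at e9
      refine le_of_mul_le_mul_right ?_ e8
      linarith
    exact ⟨m, by omega, b, hbB, by omega, e⟩
  obtain ⟨b, hb⟩ := pigeonhole_unbounded
    (P := fun m b => 0 < b ∧ F m + F (m + b + a) = 2 * F (m + b)) B hPb
  have hb0 : 0 < b := by obtain ⟨n, -, h, -⟩ := hb 0; exact h
  have heq : ∀ m, F m + F (m + b + a) = 2 * F (m + b) →
      α ^ m * (α ^ (b + a) + 1 - 2 * α ^ b) = β ^ m * (β ^ (b + a) + 1 - 2 * β ^ b) := by
    intro m e
    have e1 := hsol' _ _ _ e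
    rw [add_assoc, pow_add α m, pow_add β m, pow_add α m, pow_add β m] at e1
    linarith
  have hPα : α ^ (b + a) + 1 - 2 * α ^ b = 0 := by
    by_contra hne
    obtain ⟨N, hN⟩ := exists_small_pow hρ0 hρ1 (|β ^ (b + a) + 1 - 2 * β ^ b|) (abs_pos.2 hne)
    obtain ⟨m, hmN, -, e⟩ := hb N
    have e1 := congrArg abs (heq m e)
    rw [abs_mul, abs_mul, hβρ, abs_of_pos (pow_pos hα0 _)] at e1
    have e2 := hN m hmN
    have e3 : 0 < α ^ m := by positivity
    nlinarith
  have hPβ : β ^ (b + a) + 1 - 2 * β ^ b = 0 := by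
    obtain ⟨m, -, -, e⟩ := hb 0
    have e1 := heq m e
    rw [hPα, mul_zero] at e1
    exact (mul_eq_zero.1 e1.symm).resolve_left (pow_ne_zero _ hβ0)
  exact no_common_trinomial hs hm hlt hp ha hb0 (by linarith) (by linarith)
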